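/- Let f ∈ L¹[0,1] and γ > 0. Then: (a) the semi-discrete L¹-Potts functionals Q_γ^k Γ-converge to P_γ in L¹[0,1]; (b) each Q_γ^k attains its infimum, i.e., has a minimizer in L¹[0,1]; (c) every sequence (u_k), where u_k is a minimizer of Q_γ^k, has at least one accumulation point in L¹[0,1], and every such accumulation point u satisfies P_γ(u) = inf_{v ∈ L¹[0,1]} P_γ(v). -/

import Mathlib

open MeasureTheory Filter Set
open scoped ENNReal Classical

noncomputable section

/-- The Lebesgue measure restricted to `[0,1]`. -/
def mu01 : Measure ℝ := volume.restrict (Set.Icc (0:ℝ) 1)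

/-- The step function determined by partition points `x` and values `a`. -/
def stepF {m : ℕ} (x : Fin (m + 1) → ℝ) (a : Fin m → ℝ) : ℝ → ℝ := fun t =>
  ∑ l : Fin m, Set.indicator (Set.Ioo (x l.castSucc) (x l.succ)) (fun _ => a l) t

/-- `u` is a.e. on `[0,1]` represented by the step function with partition `x` and values `a`. -/
def IsPCRep (u : ℝ → ℝ) {m : ℕ} (x : Fin (m + 1) → ℝ) (a : Fin m → ℝ) : Prop :=
  StrictMono x ∧ x 0 = 0 ∧ x (Fin.last m) = 1 ∧ ∀ᵐ t ∂mu01, u t = stepF x a t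

/-- `u` is piecewise constant on `[0,1]` (up to a.e. equality). -/
def IsPC (u : ℝ → ℝ) : Prop :=
  ∃ (m : ℕ) (x : Fin (m + 1) → ℝ) (a : Fin m → ℝ), IsPCRep u x a

/-- The number of jumps `J(u)`: the minimal number of interior partition points over all
piecewise constant representations of `u`. -/
def jumps (u : ℝ → ℝ) : ℕ :=
  sInf {jj : ℕ | ∃ (x : Fin (jj + 2) → ℝ) (a : Fin (jj + 1) → ℝ), IsPCRep u x a}

/-- `u` is piecewise constant with all jump locations inside `S`. -/
def IsPCIn (u : ℝ → ℝ) (S : Set ℝ) : Prop :=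
  ∃ (m : ℕ) (x : Fin (m + 1) → ℝ) (a : Fin m → ℝ), IsPCRep u x a ∧
    ∀ i : Fin (m + 1), i ≠ 0 → i ≠ Fin.last m → x i ∈ S

/-- The `L¹[0,1]` distance of two functions. -/
def L1dist (u v : ℝ → ℝ) : ℝ := ∫ t, |u t - v t| ∂mu01

/-- The continuous `L¹`-Potts functional `P_γ` with data `f`. -/
def Potts (γ : ℝ) (f u : ℝ → ℝ) : ℝ≥0∞ :=
  if IsPC u then ENNReal.ofReal (γ * (jumps u : ℝ) + L1dist u f) else ⊤

/-- The (semi-)discrete `L¹`-Potts functional with data `f`, restricted to piecewise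
constant functions whose jumps lie in `S`. -/
def PottsIn (γ : ℝ) (f : ℝ → ℝ) (S : Set ℝ) (u : ℝ → ℝ) : ℝ≥0∞ :=
  if IsPCIn u S then ENNReal.ofReal (γ * (jumps u : ℝ) + L1dist u f) else ⊤

/-!
The jumps of a piecewise constant `u` are intrinsic: `J(u)` is the number of points near which `u`
is not almost everywhere constant. Being almost everywhere constant on an interval passes to `L¹`
limits, so every jump of `u` attracts a jump of `u_k` whenever `u_k → u`; hence `J` is lower
semicontinuous, which gives the liminf inequality. A recovery sequence moves the finitely many
jumps of `u` to nearby points of `X^k` and keeps the values.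

For compactness, note that on each piece the integral of an optimal step function is at most twice
that of `|f|`, since otherwise the value `0` would be strictly cheaper there. The number of jumps
being bounded, the partition points and these integrals converge along a subsequence, and a piece
shrinking to a point carries no integral in the limit; the limiting data define the limit in `L¹`.
Minimality of accumulation points is then the fundamental theorem of `Γ`-convergence.
-/

open scoped Topology

section Topology

variable {α β : Type*} [TopologicalSpace α] {l : Filter β}

lemma eventually_lt_const_iff [LinearOrder α] [OrderTopology α] {p : β → α} {a t : α}
    (hp : Tendsto p l (𝓝 a)) (ha : a ≠ t) : ∀ᶠ k in l, p k < t ↔ a < t := by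
  rcases ha.lt_or_gt with h | h
  · exact (hp.eventually_lt_const h).mono fun k hk => iff_of_true hk h
  · exact (hp.eventually_const_lt h).mono fun k hk => iff_of_false hk.asymm h.asymm

lemma eventually_const_lt_iff [LinearOrder α] [OrderTopology α] {p : β → α} {a t : α}
    (hp : Tendsto p l (𝓝 a)) (ha : a ≠ t) : ∀ᶠ k in l, t < p k ↔ t < a :=
  eventually_lt_const_iff (α := αᵒᵈ) hp ha

lemma eventuallyConst_of_tendsto [T2Space α] [CountableInterFilter l] {v : ℕ → β → α} {u : β → α}
    (hlim : ∀ᶠ s in l, Tendsto (fun k => v k s) atTop (𝓝 (u s)))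
    (hv : ∀ k, EventuallyConst (v k) l) : EventuallyConst u l := by
  rcases l.eq_or_neBot with rfl | hl
  · exact .bot
  have : Nonempty α := ⟨u hlim.exists.choose⟩
  choose c hc using fun k => eventuallyConst_iff_exists_eventuallyEq.1 (hv k)
  have hlim_c : ∀ᶠ s in l, Tendsto c atTop (𝓝 (u s)) := by
    filter_upwards [hlim, eventually_countable_forall.2 hc] with s hs hcs
    exact hs.congr hcs
  obtain ⟨s₀, hs₀⟩ := hlim_c.exists
  exact eventuallyConst_iff_exists_eventuallyEq.2
    ⟨u s₀, hlim_c.mono fun s hs => tendsto_nhds_unique hs hs₀⟩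

end Topology

section Measure

variable {α : Type*} [TopologicalSpace α] {m : MeasurableSpace α} {μ : Measure α}

instance neBot_ae_inf_nhds [μ.IsOpenPosMeasure] (t : α) : (ae μ ⊓ 𝓝 t).NeBot :=
  inf_neBot_iff_frequently_right.2 fun h =>
    frequently_ae_mem_iff.2 (Measure.measure_pos_of_mem_nhds μ h).ne'

lemma eventually_eventually_inf_nhds {l : Filter α} {t : α} {p : α → Prop}
    (h : ∀ᶠ s in l ⊓ 𝓝 t, p s) : ∀ᶠ r in 𝓝 t, ∀ᶠ s in l ⊓ 𝓝 r, p s := by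
  obtain ⟨A, hA, B, hB, hAB⟩ := mem_inf_iff_superset.1 h
  filter_upwards [eventually_mem_nhds_iff.2 hB] with r hr
  exact mem_of_superset (inter_mem_inf hA hr) hAB

lemma eventually_ae_inf_principal_of_nhds [SecondCountableTopology α] {s : Set α} {p : α → Prop}
    (h : ∀ t ∈ s, ∀ᶠ r in ae μ ⊓ 𝓝 t, p r) : ∀ᶠ r in ae μ ⊓ 𝓟 s, p r := by
  rw [eventually_inf_principal, ae_iff]
  refine measure_null_of_locally_null _ fun t ht => ?_
  have hts : t ∈ s := by_contra fun hts => ht fun hs => absurd hs hts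
  obtain ⟨A, hA, B, hB, hAB⟩ := mem_inf_iff_superset.1 (h t hts)
  refine ⟨_, inter_mem_nhdsWithin _ hB, measure_mono_null ?_ hA⟩
  rintro r ⟨hr, hrB⟩ hrA
  exact hr fun _ => hAB ⟨hrA, hrB⟩

lemma eventuallyConst_ae_of_isPreconnected [SecondCountableTopology α] [μ.IsOpenPosMeasure]
    {β : Type*} [Nonempty β] {u : α → β} {s : Set α} (hs : IsPreconnected s)
    (h : ∀ t ∈ s, EventuallyConst u (ae μ ⊓ 𝓝 t)) : EventuallyConst u (ae μ ⊓ 𝓟 s) := by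
  rcases s.eq_empty_or_nonempty with rfl | ⟨t₀, ht₀⟩
  · simp
  choose! c hc using fun t ht => eventuallyConst_iff_exists_eventuallyEq.1 (h t ht)
  have hc_locally : ∀ t ∈ s, ∀ᶠ r in 𝓝[s] t, c t = c r := by
    intro t ht
    filter_upwards [nhdsWithin_le_nhds (eventually_eventually_inf_nhds (hc t ht)),
      self_mem_nhdsWithin] with r hrt hr
    obtain ⟨q, hqt, hqr⟩ := (hrt.and (hc r hr)).exists
    exact hqt.symm.trans hqr
  have hc_const : ∀ t ∈ s, c t = c t₀ := fun t ht =>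
    hs.induction₂ (fun p q => c p = c q) hc_locally (fun _ _ _ _ _ _ => Eq.trans)
      (fun _ _ _ _ => Eq.symm) ht ht₀
  exact eventuallyConst_iff_exists_eventuallyEq.2
    ⟨c t₀, eventually_ae_inf_principal_of_nhds fun t ht => hc_const t ht ▸ hc t ht⟩

end Measure

lemma exists_seq_tendsto_of_tendsto_infEDist {α : Type*} [PseudoEMetricSpace α] {X : ℕ → Set α}
    {p : α} (h : Tendsto (fun k => Metric.infEDist p (X k)) atTop (𝓝 0)) :
    ∃ z : ℕ → α, Tendsto z atTop (𝓝 p) ∧ ∀ᶠ k in atTop, z k ∈ X k := by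
  have hex : ∀ k, ∃ q, Metric.infEDist p (X k) ≠ ⊤ →
      q ∈ X k ∧ edist p q < Metric.infEDist p (X k) + (k + 1 : ℝ≥0∞)⁻¹ := fun k => by
    by_cases hk : Metric.infEDist p (X k) = ⊤
    · exact ⟨p, fun h => absurd hk h⟩
    · obtain ⟨q, hq⟩ := Metric.infEDist_lt_iff.1
        (ENNReal.lt_add_right hk (b := (k + 1 : ℝ≥0∞)⁻¹) (by simp))
      exact ⟨q, fun _ => hq⟩
  choose z hz using hex
  have hfin : ∀ᶠ k in atTop, Metric.infEDist p (X k) ≠ ⊤ := h.eventually_ne ENNReal.zero_ne_top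
  refine ⟨z, tendsto_iff_edist_tendsto_0.2 ?_, hfin.mono fun k hk => (hz k hk).1⟩
  have hbound : Tendsto (fun k : ℕ => Metric.infEDist p (X k) + (k + 1 : ℝ≥0∞)⁻¹) atTop (𝓝 0) := by
    have hinv := (tendsto_add_atTop_iff_nat 1).2 ENNReal.tendsto_inv_nat_nhds_zero
    simpa using h.add hinv
  refine tendsto_of_tendsto_of_tendsto_of_le_of_le' tendsto_const_nhds hbound
    (Eventually.of_forall fun _ => zero_le) (hfin.mono fun k hk => ?_)
  rw [edist_comm]
  exact (hz k hk).2.le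

lemma tendsto_infEDist_of_monotone {α : Type*} [PseudoEMetricSpace α] {X : ℕ → Set α}
    (hX : Monotone X) {p : α} (hp : p ∈ closure (⋃ k, X k)) :
    Tendsto (fun k => Metric.infEDist p (X k)) atTop (𝓝 0) := by
  rw [Metric.mem_closure_iff_infEDist_zero, Metric.infEDist_iUnion] at hp
  exact hp ▸ tendsto_atTop_iInf fun _ _ h => Metric.infEDist_anti (hX h)

lemma le_of_tendsto_minimizers {α β : Type*} [CompleteLinearOrder β] {F : ℕ → α → β} {G : α → β}
    {v r : ℕ → α} {φ : ℕ → ℕ} {u w : α} (hmin : ∀ k w, F k (v k) ≤ F k w)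
    (hφ : Tendsto φ atTop atTop)
    (hu : G u ≤ liminf (fun i => F (φ i) (v (φ i))) atTop)
    (hr : limsup (fun k => F k (r k)) atTop ≤ G w) : G u ≤ G w :=
  calc G u
      ≤ liminf (fun i => F (φ i) (v (φ i))) atTop := hu
    _ ≤ limsup (fun i => F (φ i) (v (φ i))) atTop := liminf_le_limsup
    _ ≤ limsup (fun i => F (φ i) (r (φ i))) atTop :=
        limsup_le_limsup (Eventually.of_forall fun i => hmin (φ i) (r (φ i)))
    _ ≤ limsup (fun k => F k (r k)) atTop := by
        have h := limsup_le_limsup_of_le hφ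
          (u := fun k => F k (r k)) (by isBoundedDefault) (by isBoundedDefault)
        rwa [← limsup_comp] at h
    _ ≤ G w := hr

section Integral

variable {α : Type*} {m : MeasurableSpace α} {μ : Measure α}

lemma abs_mul_measureReal_le {f : α → ℝ} {U : Set α} (hf : IntegrableOn f U μ) (hU : μ U ≠ ⊤)
    (c : ℝ) : |c| * μ.real U ≤ ∫ t in U, |c - f t| ∂μ + ∫ t in U, |f t| ∂μ := by
  have hc : IntegrableOn (fun _ => c) U μ := integrableOn_const hU
  calc |c| * μ.real U = ∫ _ in U, |c| ∂μ := by rw [setIntegral_const, smul_eq_mul, mul_comm]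
    _ ≤ ∫ t in U, (|c - f t| + |f t|) ∂μ :=
        integral_mono hc.abs ((hc.sub hf).abs.add hf.abs) fun t => by
          simpa using abs_add_le (c - f t) (f t)
    _ = ∫ t in U, |c - f t| ∂μ + ∫ t in U, |f t| ∂μ := integral_add (hc.sub hf).abs hf.abs

lemma setIntegral_abs_lt_setIntegral_abs_sub {f : α → ℝ} {U : Set α} (hf : IntegrableOn f U μ)
    (hU : μ U ≠ ⊤) {c : ℝ} (hc : 2 * ∫ t in U, |f t| ∂μ < |c| * μ.real U) :
    ∫ t in U, |f t| ∂μ < ∫ t in U, |c - f t| ∂μ := by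
  linarith [abs_mul_measureReal_le hf hU c]

end Integral

instance : IsFiniteMeasure mu01 := by
  unfold mu01; infer_instance

instance : NullSingletonClass mu01 := by
  unfold mu01; infer_instance

lemma ae_mem_Ioo_mu01 : ∀ᵐ t ∂mu01, t ∈ Ioo (0 : ℝ) 1 := by
  rw [mu01, ← restrict_Ioo_eq_restrict_Icc]
  exact ae_restrict_mem measurableSet_Ioo

lemma mu01_real_Ioo {p q : ℝ} (hp : 0 ≤ p) (hpq : p ≤ q) (hq : q ≤ 1) :
    mu01.real (Ioo p q) = q - p := by
  rw [mu01, measureReal_restrict_apply measurableSet_Ioo,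
    inter_eq_left.2 (Ioo_subset_Icc_self.trans (Icc_subset_Icc hp hq)),
    Real.volume_real_Ioo_of_le hpq]

lemma ae_volume_inf_principal_le {U : Set ℝ} (hU : U ⊆ Icc 0 1) :
    ae volume ⊓ 𝓟 U ≤ ae mu01 := by
  rw [mu01, ae_restrict_eq measurableSet_Icc]
  exact inf_le_inf_left _ (principal_mono.2 hU)

section L1dist

variable {u v w f : ℝ → ℝ}

lemma integrable_abs_sub (hu : Integrable u mu01) (hv : Integrable v mu01) :
    Integrable (fun t => |u t - v t|) mu01 :=
  (hu.sub hv).abs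

lemma L1dist_nonneg (u v : ℝ → ℝ) : 0 ≤ L1dist u v := integral_nonneg fun _ => abs_nonneg _

lemma L1dist_comm (u v : ℝ → ℝ) : L1dist u v = L1dist v u := by
  simp only [L1dist, abs_sub_comm]

lemma L1dist_congr (h : u =ᵐ[mu01] v) (f : ℝ → ℝ) : L1dist u f = L1dist v f :=
  integral_congr_ae (h.mono fun t ht => by simp only [ht])

lemma L1dist_triangle (hu : Integrable u mu01) (hv : Integrable v mu01)
    (hw : Integrable w mu01) : L1dist u w ≤ L1dist u v + L1dist v w := by
  unfold L1dist
  rw [← integral_add (integrable_abs_sub hu hv) (integrable_abs_sub hv hw)]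
  exact integral_mono (integrable_abs_sub hu hw)
    ((integrable_abs_sub hu hv).add (integrable_abs_sub hv hw)) fun t => abs_sub_le _ _ _

lemma tendsto_L1dist_of_tendsto {ι : Type*} {l : Filter ι} {v : ι → ℝ → ℝ}
    (hu : Integrable u mu01) (hv : ∀ k, Integrable (v k) mu01)
    (hlim : Tendsto (fun k => L1dist (v k) u) l (𝓝 0)) (hf : Integrable f mu01) :
    Tendsto (fun k => L1dist (v k) f) l (𝓝 (L1dist u f)) := by
  refine tendsto_iff_dist_tendsto_zero.2 (squeeze_zero (fun _ => dist_nonneg) (fun k => ?_) hlim)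
  rw [Real.dist_eq, abs_sub_le_iff]
  have hvf := L1dist_triangle (hv k) hu hf
  have huf := L1dist_triangle hu (hv k) hf
  rw [L1dist_comm u (v k)] at huf
  constructor <;> linarith

lemma exists_subseq_ae_tendsto_of_tendsto_L1dist {v : ℕ → ℝ → ℝ} (hu : Integrable u mu01)
    (hv : ∀ k, Integrable (v k) mu01) (hlim : Tendsto (fun k => L1dist (v k) u) atTop (𝓝 0)) :
    ∃ φ : ℕ → ℕ, StrictMono φ ∧
      ∀ᵐ t ∂mu01, Tendsto (fun k => v (φ k) t) atTop (𝓝 (u t)) := by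
  refine TendstoInMeasure.exists_seq_tendsto_ae (tendstoInMeasure_of_tendsto_eLpNorm one_ne_zero
    (fun k => (hv k).aestronglyMeasurable) hu.aestronglyMeasurable ?_)
  have h : ∀ k, eLpNorm (v k - u) 1 mu01 = ENNReal.ofReal (L1dist (v k) u) := fun k => by
    rw [eLpNorm_one_eq_lintegral_enorm, ← ofReal_integral_norm_eq_lintegral_enorm ((hv k).sub hu)]
    rfl
  simpa only [h, ENNReal.ofReal_zero] using ENNReal.tendsto_ofReal hlim

end L1dist

/-- A subdivision of `[0,1]`. Repeated points are allowed, so that the notion is stable under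
limits; the partitions of `IsPCRep` are the strictly monotone subdivisions. -/
structure IsSubdivision {m : ℕ} (x : Fin (m + 1) → ℝ) : Prop where
  monotone : Monotone x
  zero : x 0 = 0
  last : x (Fin.last m) = 1

/-- The `l`-th open interval cut out by the points `x`; it is empty where points coincide. -/
abbrev piece {m : ℕ} (x : Fin (m + 1) → ℝ) (l : Fin m) : Set ℝ := Ioo (x l.castSucc) (x l.succ)

section Step

variable {m : ℕ} {x : Fin (m + 1) → ℝ}

lemma integrable_stepF (x : Fin (m + 1) → ℝ) (a : Fin m → ℝ) : Integrable (stepF x a) mu01 :=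
  integrable_finsetSum _ fun _ _ => (integrable_const _).indicator measurableSet_Ioo

lemma abs_stepF_le (x : Fin (m + 1) → ℝ) (a : Fin m → ℝ) (t : ℝ) : |stepF x a t| ≤ ∑ l, |a l| :=
  (Finset.abs_sum_le_sum_abs _ _).trans <| Finset.sum_le_sum fun l _ =>
    norm_indicator_le_norm_self (s := piece x l) (fun _ : ℝ => a l) t

lemma pairwise_disjoint_piece (hx : Monotone x) :
    Pairwise (Function.onFun Disjoint (piece x)) := fun i j hij => by
  simpa only [Function.onFun, Fin.orderSucc_castSucc] using
    hx.pairwise_disjoint_on_Ioo_succ ((Fin.castSucc_injective m).ne hij)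

lemma notMem_piece (hx : Monotone x) (i : Fin (m + 1)) (l : Fin m) : x i ∉ piece x l := fun hi =>
  (Fin.castSucc_lt_iff_succ_le.1 (hx.reflect_lt hi.1)).not_gt (hx.reflect_lt hi.2)

lemma stepF_apply (hx : Monotone x) (a : Fin m → ℝ) {l : Fin m} {t : ℝ} (ht : t ∈ piece x l) :
    stepF x a t = a l := by
  rw [stepF, Finset.sum_eq_single l (fun j _ hj => ?_) (by simp)]
  · exact indicator_of_mem ht _
  · exact indicator_of_notMem (disjoint_right.1 (pairwise_disjoint_piece hx hj) ht) _

lemma eventually_strictMono_of_tendsto {ι : Type*} {k : Filter ι} {y : ι → Fin (m + 1) → ℝ}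
    (hx : StrictMono x) (hy : Tendsto y k (𝓝 x)) : ∀ᶠ i in k, StrictMono (y i) := by
  have hlt : ∀ᶠ i in k, ∀ l : Fin m, y i l.castSucc < y i l.succ := eventually_all.2 fun l =>
    (hy.apply_nhds _).eventually_lt (hy.apply_nhds _) (hx l.castSucc_lt_succ)
  exact hlt.mono fun _ => Fin.strictMono_iff_lt_succ.2

lemma tendsto_L1dist_stepF {y : ℕ → Fin (m + 1) → ℝ} (hy : Tendsto y atTop (𝓝 x))
    (a : Fin m → ℝ) : Tendsto (fun k => L1dist (stepF (y k) a) (stepF x a)) atTop (𝓝 0) := by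
  have hlim : ∀ᵐ t ∂mu01, ∀ᶠ k in atTop, stepF (y k) a t = stepF x a t := by
    filter_upwards [(finite_range x).countable.ae_notMem mu01] with t ht
    have hne : ∀ i, x i ≠ t := fun i hi => ht ⟨i, hi⟩
    filter_upwards [eventually_all.2 fun i => eventually_lt_const_iff (hy.apply_nhds i) (hne i),
      eventually_all.2 fun i => eventually_const_lt_iff (hy.apply_nhds i) (hne i)] with k hlt hgt
    simp only [stepF, indicator, mem_Ioo, hlt, hgt]
  have h := tendsto_integral_of_dominated_convergence (μ := mu01)
    (F := fun k t => |stepF (y k) a t - stepF x a t|) (f := fun _ => 0)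
    (fun _ => ∑ l, |a l| + ∑ l, |a l|)
    (fun k => (integrable_abs_sub (integrable_stepF (y k) a)
      (integrable_stepF x a)).aestronglyMeasurable)
    (integrable_const _)
    (fun k => ae_of_all _ fun t => by
      rw [Real.norm_eq_abs, abs_abs]
      exact (abs_sub _ _).trans (add_le_add (abs_stepF_le _ _ _) (abs_stepF_le _ _ _)))
    (hlim.mono fun t ht => tendsto_const_nhds.congr' <| ht.mono fun k hk => by simp [hk])
  simpa only [L1dist, integral_zero] using h

namespace IsSubdivision

lemma mem_Icc (hx : IsSubdivision x) (i : Fin (m + 1)) : x i ∈ Icc (0 : ℝ) 1 :=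
  ⟨hx.zero ▸ hx.monotone (Fin.zero_le i), hx.last ▸ hx.monotone (Fin.le_last i)⟩

lemma piece_subset_Ioo (hx : IsSubdivision x) (l : Fin m) : piece x l ⊆ Ioo 0 1 :=
  Ioo_subset_Ioo (hx.mem_Icc _).1 (hx.mem_Icc _).2

lemma mu01_real_piece (hx : IsSubdivision x) (l : Fin m) :
    mu01.real (piece x l) = x l.succ - x l.castSucc :=
  mu01_real_Ioo (hx.mem_Icc _).1 (hx.monotone l.castSucc_le_succ) (hx.mem_Icc _).2

lemma exists_mem_piece (hx : IsSubdivision x) {t : ℝ} (ht : t ∈ Ioo (0 : ℝ) 1)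
    (hxt : t ∉ range x) : ∃ l, t ∈ piece x l := by
  by_contra! h
  have hlt : ∀ i, x i < t := by
    intro i
    induction i using Fin.induction with
    | zero => exact hx.zero ▸ ht.1
    | succ i ih => exact lt_of_le_of_ne (not_lt.1 fun hi => h i ⟨ih, hi⟩) fun hi => hxt ⟨_, hi⟩
  exact (hlt (Fin.last m)).asymm (hx.last ▸ ht.2)

lemma ae_exists_mem_piece (hx : IsSubdivision x) : ∀ᵐ t ∂mu01, ∃ l, t ∈ piece x l := by
  filter_upwards [ae_mem_Ioo_mu01, (finite_range x).countable.ae_notMem mu01] with t ht hxt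
  exact hx.exists_mem_piece ht hxt

lemma integral_eq_sum_piece (hx : IsSubdivision x) {g : ℝ → ℝ} (hg : Integrable g mu01) :
    ∫ t, g t ∂mu01 = ∑ l, ∫ t in piece x l, g t ∂mu01 := by
  rw [← integral_iUnion_fintype (fun _ => measurableSet_Ioo) (pairwise_disjoint_piece hx.monotone)
    fun _ => hg.integrableOn, Measure.restrict_eq_self_of_ae_mem]
  simpa only [mem_iUnion] using hx.ae_exists_mem_piece

lemma L1dist_stepF (hx : IsSubdivision x) (a : Fin m → ℝ) {f : ℝ → ℝ} (hf : Integrable f mu01) :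
    L1dist (stepF x a) f = ∑ l, ∫ t in piece x l, |a l - f t| ∂mu01 := by
  rw [L1dist, hx.integral_eq_sum_piece (integrable_abs_sub (integrable_stepF x a) hf)]
  refine Finset.sum_congr rfl fun l _ => setIntegral_congr_fun measurableSet_Ioo fun t ht => ?_
  simp only [stepF_apply hx.monotone a ht]

lemma L1dist_stepF_stepF (hx : IsSubdivision x) (a b : Fin m → ℝ) :
    L1dist (stepF x a) (stepF x b) = ∑ l, |a l - b l| * (x l.succ - x l.castSucc) := by
  rw [hx.L1dist_stepF a (integrable_stepF x b)]
  refine Finset.sum_congr rfl fun l _ => ?_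
  rw [setIntegral_congr_fun measurableSet_Ioo (g := fun _ => |a l - b l|)
    fun t ht => by simp only [stepF_apply hx.monotone b ht], setIntegral_const,
    hx.mu01_real_piece, smul_eq_mul, mul_comm]

end IsSubdivision

end Step

/-- The essential jump set of `u` in `(0,1)`, i.e. the points near which `u` is not almost
everywhere constant. Unlike the partition points of a representation it depends only on `u`. -/
def jumpSet (u : ℝ → ℝ) : Set ℝ := {t ∈ Ioo (0 : ℝ) 1 | ¬ EventuallyConst u (ae volume ⊓ 𝓝 t)}

section JumpSet

variable {m : ℕ} {x : Fin (m + 1) → ℝ} {a : Fin m → ℝ} {u : ℝ → ℝ} {S : Set ℝ}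

namespace IsPCRep

lemma isSubdivision (h : IsPCRep u x a) : IsSubdivision x := ⟨h.1.monotone, h.2.1, h.2.2.1⟩

lemma ae_eq (h : IsPCRep u x a) : u =ᵐ[mu01] stepF x a := h.2.2.2

lemma eventuallyConst (h : IsPCRep u x a) (l : Fin m) :
    EventuallyConst u (ae volume ⊓ 𝓟 (piece x l)) := by
  have hsub := (h.isSubdivision.piece_subset_Ioo l).trans Ioo_subset_Icc_self
  refine eventuallyConst_iff_exists_eventuallyEq.2 ⟨a l, ?_⟩
  filter_upwards [ae_volume_inf_principal_le hsub h.ae_eq, mem_inf_of_right (mem_principal_self _)]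
    with t hut ht
  rw [hut, stepF_apply h.isSubdivision.monotone a ht]

lemma jumpSet_subset (h : IsPCRep u x a) : jumpSet u ⊆ x '' {0, Fin.last m}ᶜ := by
  rintro t ⟨ht, hconst⟩
  by_contra hinner
  have hxt : t ∉ range x := by
    rintro ⟨i, rfl⟩
    refine hinner (mem_image_of_mem x ?_)
    rintro (rfl | rfl)
    · exact ht.1.ne' h.isSubdivision.zero
    · exact ht.2.ne h.isSubdivision.last
  obtain ⟨l, hl⟩ := h.isSubdivision.exists_mem_piece ht hxt
  exact hconst <| (h.eventuallyConst l).anti <|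
    inf_le_inf_left _ (le_principal_iff.2 (Ioo_mem_nhds hl.1 hl.2))

lemma isPC (h : IsPCRep u x a) : IsPC u := ⟨m, x, a, h⟩

lemma finite_jumpSet (h : IsPCRep u x a) : (jumpSet u).Finite :=
  ((toFinite _).image x).subset h.jumpSet_subset

lemma ncard_jumpSet_le {n : ℕ} {x : Fin (n + 2) → ℝ} {a : Fin (n + 1) → ℝ}
    (h : IsPCRep u x a) : (jumpSet u).ncard ≤ n :=
  calc (jumpSet u).ncard
      ≤ (x '' {0, Fin.last (n + 1)}ᶜ).ncard := ncard_le_ncard h.jumpSet_subset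
    _ ≤ ({0, Fin.last (n + 1)}ᶜ : Set (Fin (n + 2))).ncard := ncard_image_le
    _ = n := by rw [ncard_compl, ncard_pair (Fin.last_pos.ne), Nat.card_fin, Nat.add_sub_cancel]

end IsPCRep

lemma isPCRep_stepF (hx : StrictMono x) (h0 : x 0 = 0) (h1 : x (Fin.last m) = 1)
    (a : Fin m → ℝ) : IsPCRep (stepF x a) x a :=
  ⟨hx, h0, h1, ae_of_all _ fun _ => rfl⟩

lemma exists_isPCRep (hx : StrictMono x) (h0 : x 0 = 0) (h1 : x (Fin.last m) = 1)
    (hu : jumpSet u ⊆ range x) : ∃ a, IsPCRep u x a := by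
  have hsub : IsSubdivision x := ⟨hx.monotone, h0, h1⟩
  have hconst : ∀ l, EventuallyConst u (ae volume ⊓ 𝓟 (piece x l)) := fun l =>
    eventuallyConst_ae_of_isPreconnected isPreconnected_Ioo fun t ht => by
      by_contra hjump
      obtain ⟨i, rfl⟩ := hu ⟨hsub.piece_subset_Ioo l ht, hjump⟩
      exact notMem_piece hx.monotone i l ht
  choose a ha using fun l => eventuallyConst_iff_exists_eventuallyEq.1 (hconst l)
  refine ⟨a, hx, h0, h1, ?_⟩
  have hpieces : ∀ᵐ t ∂mu01, ∀ l, t ∈ piece x l → u t = a l :=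
    ae_restrict_of_ae (ae_all_iff.2 fun l => eventually_inf_principal.1 (ha l))
  filter_upwards [hpieces, hsub.ae_exists_mem_piece] with t hut ⟨l, hl⟩
  rw [hut l hl, stepF_apply hx.monotone a hl]

lemma exists_partition (T : Finset ℝ) (hT : (T : Set ℝ) ⊆ Ioo 0 1) :
    ∃ x : Fin (T.card + 2) → ℝ, StrictMono x ∧ x 0 = 0 ∧ x (Fin.last _) = 1 ∧
      x '' {0, Fin.last _}ᶜ = T := by
  have h1 : (1 : ℝ) ∉ T := fun h => (hT h).2.false
  have h0 : (0 : ℝ) ∉ insert 1 T := by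
    rw [Finset.mem_insert, not_or]
    exact ⟨zero_ne_one, fun h => (hT h).1.false⟩
  have hcard : (insert 0 (insert 1 T)).card = T.card + 2 := by
    rw [Finset.card_insert_of_notMem h0, Finset.card_insert_of_notMem h1]
  set x := (insert 0 (insert 1 T)).orderEmbOfFin hcard
  have hrange : range x = insert 0 (insert 1 (T : Set ℝ)) := by simp [x]
  have hmem : ∀ i, x i ∈ Icc (0 : ℝ) 1 := fun i => by
    rcases hrange.subset ⟨i, rfl⟩ with h | h | h
    · simp [h]
    · simp [h]
    · exact Ioo_subset_Icc_self (hT h)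
  have hx0 : x 0 = 0 := by
    obtain ⟨i, hi⟩ := hrange.superset (mem_insert 0 _)
    exact le_antisymm (hi ▸ x.monotone (Fin.zero_le i)) (hmem 0).1
  have hx1 : x (Fin.last _) = 1 := by
    obtain ⟨i, hi⟩ := hrange.superset (mem_insert_of_mem 0 (mem_insert 1 _))
    exact le_antisymm (hmem _).2 (hi.ge.trans (x.monotone (Fin.le_last i)))
  refine ⟨x, x.strictMono, hx0, hx1, ?_⟩
  rw [← range_sdiff_image x.injective, hrange, image_pair, hx0, hx1]
  ext t
  have ht : t ∈ T → t ≠ 0 ∧ t ≠ 1 := fun ht => ⟨(hT ht).1.ne', (hT ht).2.ne⟩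
  simp only [Set.mem_sdiff, mem_insert_iff, mem_singleton_iff, Finset.mem_coe]
  tauto

lemma exists_minimal_isPCRep (h : (jumpSet u).Finite) :
    ∃ (x : Fin ((jumpSet u).ncard + 2) → ℝ) (a : Fin ((jumpSet u).ncard + 1) → ℝ),
      IsPCRep u x a ∧ x '' {0, Fin.last _}ᶜ = jumpSet u := by
  obtain ⟨x, hx, h0, h1, himage⟩ := exists_partition h.toFinset (by
    rw [h.coe_toFinset]; exact fun t ht => ht.1)
  rw [h.coe_toFinset] at himage
  rw [ncard_eq_toFinset_card _ h]
  obtain ⟨a, ha⟩ := exists_isPCRep hx h0 h1 (himage.symm.subset.trans (image_subset_range _ _))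
  exact ⟨x, a, ha, himage⟩

lemma isPCIn_iff : IsPCIn u S ↔ (jumpSet u).Finite ∧ jumpSet u ⊆ S := by
  constructor
  · rintro ⟨m, x, a, h, hS⟩
    refine ⟨h.finite_jumpSet, h.jumpSet_subset.trans (image_subset_iff.2 fun i hi => ?_)⟩
    exact hS i (fun h0 => hi (.inl h0)) fun h1 => hi (.inr h1)
  · rintro ⟨hfin, hS⟩
    obtain ⟨x, a, h, himage⟩ := exists_minimal_isPCRep hfin
    refine ⟨_, x, a, h, fun i h0 h1 => hS (himage.subset (mem_image_of_mem x ?_))⟩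
    rintro (hi | hi)
    exacts [h0 hi, h1 hi]

lemma isPC_iff : IsPC u ↔ (jumpSet u).Finite := by
  refine ⟨fun ⟨_, _, _, h⟩ => h.finite_jumpSet, fun h => ?_⟩
  obtain ⟨x, a, hxa, -⟩ := exists_minimal_isPCRep h
  exact hxa.isPC

lemma jumps_eq_ncard (h : (jumpSet u).Finite) : jumps u = (jumpSet u).ncard := by
  obtain ⟨x, a, hxa, -⟩ := exists_minimal_isPCRep h
  refine le_antisymm (Nat.sInf_le ⟨x, a, hxa⟩) (le_csInf ⟨_, x, a, hxa⟩ ?_)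
  rintro n ⟨y, b, hyb⟩
  exact hyb.ncard_jumpSet_le

lemma IsPC.integrable (h : IsPC u) : Integrable u mu01 := by
  obtain ⟨m, x, a, h⟩ := h
  exact (integrable_stepF x a).congr h.ae_eq.symm

end JumpSet

section Potts

variable {γ : ℝ} {f u : ℝ → ℝ} {S : Set ℝ} {b : ℝ≥0∞}

lemma Potts_eq_ofReal (h : (jumpSet u).Finite) :
    Potts γ f u = ENNReal.ofReal (γ * (jumpSet u).ncard + L1dist u f) := by
  rw [Potts, if_pos (isPC_iff.2 h), jumps_eq_ncard h]

lemma Potts_le_iff (hb : b ≠ ⊤) :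
    Potts γ f u ≤ b ↔ (jumpSet u).Finite ∧ γ * (jumpSet u).ncard + L1dist u f ≤ b.toReal := by
  by_cases h : (jumpSet u).Finite
  · simp only [Potts_eq_ofReal h, ENNReal.ofReal_le_iff_le_toReal hb, h, true_and]
  · simp only [Potts, isPC_iff, h, if_false, top_le_iff, hb, false_and]

lemma PottsIn_eq_Potts_of_subset (h : jumpSet u ⊆ S) : PottsIn γ f S u = Potts γ f u := by
  simp only [PottsIn, Potts, isPCIn_iff, isPC_iff, h, and_true]

lemma PottsIn_eq_top_of_not_subset (h : ¬ jumpSet u ⊆ S) : PottsIn γ f S u = ⊤ := by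
  rw [PottsIn, if_neg fun hu => h (isPCIn_iff.1 hu).2]

lemma PottsIn_le_iff (hb : b ≠ ⊤) : PottsIn γ f S u ≤ b ↔ jumpSet u ⊆ S ∧ Potts γ f u ≤ b := by
  by_cases h : jumpSet u ⊆ S
  · simp only [PottsIn_eq_Potts_of_subset h, h, true_and]
  · simp only [PottsIn_eq_top_of_not_subset h, h, false_and, top_le_iff, hb]

lemma Potts_le_PottsIn (γ : ℝ) (f : ℝ → ℝ) (S : Set ℝ) (u : ℝ → ℝ) :
    Potts γ f u ≤ PottsIn γ f S u := by
  by_cases h : jumpSet u ⊆ S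
  · exact (PottsIn_eq_Potts_of_subset h).ge
  · exact (PottsIn_eq_top_of_not_subset h).symm ▸ le_top

lemma IsPCRep.PottsIn_le {n : ℕ} {x : Fin (n + 2) → ℝ} {a : Fin (n + 1) → ℝ} (h : IsPCRep u x a)
    (hγ : 0 ≤ γ) (f : ℝ → ℝ) (hS : x '' {0, Fin.last _}ᶜ ⊆ S) :
    PottsIn γ f S u ≤ ENNReal.ofReal (γ * n + L1dist u f) := by
  have hcard := h.ncard_jumpSet_le
  rw [PottsIn_eq_Potts_of_subset (h.jumpSet_subset.trans hS), Potts_eq_ofReal h.finite_jumpSet]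
  gcongr

end Potts

section LowerSemicontinuity

variable {γ : ℝ} {f u : ℝ → ℝ} {v : ℕ → ℝ → ℝ} {S : Set ℝ} {b : ℝ≥0∞}

lemma eventuallyConst_of_tendsto_L1dist (hu : Integrable u mu01) (hv : ∀ k, Integrable (v k) mu01)
    (hlim : Tendsto (fun k => L1dist (v k) u) atTop (𝓝 0)) {U : Set ℝ} (hU : U ⊆ Icc 0 1)
    (hconst : ∃ᶠ k in atTop, EventuallyConst (v k) (ae volume ⊓ 𝓟 U)) :
    EventuallyConst u (ae volume ⊓ 𝓟 U) := by
  obtain ⟨φ, hφ, hvφ⟩ := extraction_of_frequently_atTop hconst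
  obtain ⟨ψ, -, hψ⟩ := exists_subseq_ae_tendsto_of_tendsto_L1dist hu (fun k => hv (φ k))
    (hlim.comp hφ.tendsto_atTop)
  exact eventuallyConst_of_tendsto (ae_volume_inf_principal_le hU hψ) fun k => hvφ (ψ k)

lemma eventually_jumpSet_inter_nonempty (hu : Integrable u mu01) (hv : ∀ k, Integrable (v k) mu01)
    (hlim : Tendsto (fun k => L1dist (v k) u) atTop (𝓝 0)) {t : ℝ} (ht : t ∈ jumpSet u)
    {U : Set ℝ} (hU : U ∈ 𝓝 t) : ∀ᶠ k in atTop, (jumpSet (v k) ∩ U).Nonempty := by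
  obtain ⟨p, q, hpq, hsub⟩ :=
    mem_nhds_iff_exists_Ioo_subset.1 (inter_mem hU (Ioo_mem_nhds ht.1.1 ht.1.2))
  by_contra hcon
  have hconst : ∃ᶠ k in atTop, EventuallyConst (v k) (ae volume ⊓ 𝓟 (Ioo p q)) :=
    (not_eventually.1 hcon).mono fun k hk =>
      eventuallyConst_ae_of_isPreconnected isPreconnected_Ioo fun s hs => by
        by_contra hjump
        exact hk ⟨s, ⟨(hsub hs).2, hjump⟩, (hsub hs).1⟩
  have hIcc : Ioo p q ⊆ Icc 0 1 := fun s hs => Ioo_subset_Icc_self (hsub hs).2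
  exact ht.2 <| (eventuallyConst_of_tendsto_L1dist hu hv hlim hIcc hconst).anti <|
    inf_le_inf_left _ (le_principal_iff.2 (Ioo_mem_nhds hpq.1 hpq.2))

lemma eventually_card_le_ncard_jumpSet (hu : Integrable u mu01) (hv : ∀ k, Integrable (v k) mu01)
    (hlim : Tendsto (fun k => L1dist (v k) u) atTop (𝓝 0)) {F : Finset ℝ}
    (hF : (F : Set ℝ) ⊆ jumpSet u) :
    ∀ᶠ k in atTop, (jumpSet (v k)).Finite → F.card ≤ (jumpSet (v k)).ncard := by
  obtain ⟨W, hW, hdisj⟩ := F.finite_toSet.t2_separation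
  have hnonempty : ∀ᶠ k in atTop, ∀ t ∈ F, (jumpSet (v k) ∩ W t).Nonempty :=
    (eventually_all_finset F).2 fun t ht =>
      eventually_jumpSet_inter_nonempty hu hv hlim (hF ht) ((hW t).2.mem_nhds (hW t).1)
  filter_upwards [hnonempty] with k hk hfin
  choose! g hg using hk
  rw [← ncard_coe_finset]
  refine ncard_le_ncard_of_injOn g (fun t ht => (hg t ht).1) (fun s hs t ht hst => ?_) hfin
  by_contra hne
  exact disjoint_left.1 (hdisj hs ht hne) (hg s hs).2 (hst ▸ (hg t ht).2)

lemma jumpSet_subset_of_tendsto (hS : IsClosed S) (hu : Integrable u mu01)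
    (hv : ∀ k, Integrable (v k) mu01) (hlim : Tendsto (fun k => L1dist (v k) u) atTop (𝓝 0))
    (hvS : ∀ k, jumpSet (v k) ⊆ S) : jumpSet u ⊆ S := fun t ht =>
  hS.closure_subset <| mem_closure_iff_nhds.2 fun U hU => by
    obtain ⟨k, s, hs, hsU⟩ := (eventually_jumpSet_inter_nonempty hu hv hlim ht hU).exists
    exact ⟨s, hsU, hvS k hs⟩

lemma integrable_of_Potts_ne_top (h : Potts γ f u ≠ ⊤) : Integrable u mu01 :=
  (isPC_iff.2 ((Potts_le_iff h).1 le_rfl).1).integrable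

lemma Potts_le_of_tendsto (hγ : 0 < γ) (hf : Integrable f mu01) (hu : Integrable u mu01)
    (hlim : Tendsto (fun k => L1dist (v k) u) atTop (𝓝 0)) (hv : ∀ k, Potts γ f (v k) ≤ b) :
    Potts γ f u ≤ b := by
  rcases eq_or_ne b ⊤ with rfl | hb
  · exact le_top
  have hvi : ∀ k, Integrable (v k) mu01 := fun k =>
    integrable_of_Potts_ne_top (ne_top_of_le_ne_top hb (hv k))
  have hbound : ∀ F : Finset ℝ, (F : Set ℝ) ⊆ jumpSet u →
      γ * F.card + L1dist u f ≤ b.toReal := fun F hF => by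
    refine le_of_tendsto ((tendsto_L1dist_of_tendsto hu hvi hlim hf).const_add _)
      ((eventually_card_le_ncard_jumpSet hu hvi hlim hF).mono fun k hk => ?_)
    obtain ⟨hfin, hle⟩ := (Potts_le_iff hb).1 (hv k)
    have := hk hfin
    exact le_trans (by gcongr) hle
  have hfin : (jumpSet u).Finite := by
    by_contra hinf
    obtain ⟨N, hN⟩ := exists_nat_gt (b.toReal / γ)
    obtain ⟨F, hF, rfl⟩ := Set.Infinite.exists_subset_card_eq hinf N
    rw [div_lt_iff₀' hγ] at hN
    linarith [hbound F hF, L1dist_nonneg u f]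
  refine (Potts_le_iff hb).2 ⟨hfin, ?_⟩
  rw [ncard_eq_toFinset_card _ hfin]
  exact hbound _ hfin.coe_toFinset.subset

lemma Potts_le_liminf (hγ : 0 < γ) (hf : Integrable f mu01) (hu : Integrable u mu01)
    (hlim : Tendsto (fun k => L1dist (v k) u) atTop (𝓝 0)) :
    Potts γ f u ≤ liminf (fun k => Potts γ f (v k)) atTop := by
  refine le_of_forall_gt_imp_ge_of_dense fun b hb => ?_
  obtain ⟨φ, hφ, hvφ⟩ := extraction_of_frequently_atTop
    (frequently_lt_of_liminf_lt (by isBoundedDefault) hb)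
  exact Potts_le_of_tendsto hγ hf hu (hlim.comp hφ.tendsto_atTop) fun k => (hvφ k).le

lemma Potts_le_liminf_PottsIn (hγ : 0 < γ) (hf : Integrable f mu01) (S : ℕ → Set ℝ)
    (hu : Integrable u mu01) (hlim : Tendsto (fun k => L1dist (v k) u) atTop (𝓝 0)) :
    Potts γ f u ≤ liminf (fun k => PottsIn γ f (S k) (v k)) atTop :=
  (Potts_le_liminf hγ hf hu hlim).trans <|
    liminf_le_liminf <| .of_forall fun k => Potts_le_PottsIn γ f (S k) (v k)

end LowerSemicontinuity

section Compactness

variable {γ : ℝ} {f u : ℝ → ℝ} {S : Set ℝ} {b : ℝ≥0∞} {m : ℕ}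

/-- The integrals of `stepF x a` over the pieces of the subdivision `x`. Along a sequence of step
functions they may converge where the values themselves blow up. -/
def mass (x : Fin (m + 1) → ℝ) (a : Fin m → ℝ) : Fin m → ℝ := fun l =>
  a l * (x l.succ - x l.castSucc)

/-- On every piece the mass of the step function is dominated by that of the data `f`; this is the
property of optimal step functions on which compactness rests. -/
def IsTame (f : ℝ → ℝ) (x : Fin (m + 1) → ℝ) (a : Fin m → ℝ) : Prop :=
  ∀ l, |mass x a l| ≤ 2 * ∫ t in piece x l, |f t| ∂mu01

/-- `u` is represented by a step function with at most `N` jumps that is tame for `f`. -/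
def HasTameRep (f : ℝ → ℝ) (N : ℕ) (u : ℝ → ℝ) : Prop :=
  ∃ n ≤ N, ∃ (x : Fin (n + 2) → ℝ) (a : Fin (n + 1) → ℝ), IsPCRep u x a ∧ IsTame f x a

lemma tendsto_L1dist_stepF_of_tendsto_mass {x : ℕ → Fin (m + 1) → ℝ} {a : ℕ → Fin m → ℝ}
    {y : Fin (m + 1) → ℝ} {c : Fin m → ℝ} (hx : ∀ k, IsSubdivision (x k))
    (hy : Tendsto x atTop (𝓝 y)) (hc : Tendsto (fun k => mass (x k) (a k)) atTop (𝓝 c))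
    (hcollapse : ∀ l : Fin m, y l.succ - y l.castSucc = 0 → c l = 0) :
    Tendsto (fun k => L1dist (stepF (x k) (a k))
      (stepF y fun l => c l / (y l.succ - y l.castSucc))) atTop (𝓝 0) := by
  set A : Fin m → ℝ := fun l => c l / (y l.succ - y l.castSucc)
  have hvalues : Tendsto (fun k => L1dist (stepF (x k) (a k)) (stepF (x k) A)) atTop (𝓝 0) := by
    have hterm : ∀ l, Tendsto (fun k => |mass (x k) (a k) l - mass (x k) A l|) atTop (𝓝 0) := by
      intro l
      have hmass : A l * (y l.succ - y l.castSucc) = c l := div_mul_cancel_of_imp (hcollapse l)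
      have hA : Tendsto (fun k => mass (x k) A l) atTop (𝓝 (c l)) :=
        hmass ▸ ((hy.apply_nhds _).sub (hy.apply_nhds _)).const_mul (A l)
      simpa using ((hc.apply_nhds l).sub hA).abs
    have hsum := tendsto_finsetSum Finset.univ fun l _ => hterm l
    rw [Finset.sum_const_zero] at hsum
    refine hsum.congr fun k => ?_
    rw [(hx k).L1dist_stepF_stepF]
    refine Finset.sum_congr rfl fun l _ => ?_
    rw [mass, mass, ← sub_mul, abs_mul,
      abs_of_nonneg (sub_nonneg.2 ((hx k).monotone l.castSucc_le_succ))]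
  refine squeeze_zero (fun _ => L1dist_nonneg _ _) (fun k => L1dist_triangle
    (integrable_stepF _ _) (integrable_stepF (x k) A) (integrable_stepF _ _)) ?_
  simpa using hvalues.add (tendsto_L1dist_stepF hy A)

namespace IsTame

lemma mass_mem_Icc {x : Fin (m + 1) → ℝ} {a : Fin m → ℝ} (h : IsTame f x a)
    (hf : Integrable f mu01) :
    mass x a ∈ Icc (fun _ => -(2 * ∫ t, |f t| ∂mu01)) (fun _ => 2 * ∫ t, |f t| ∂mu01) := by
  have hbound : ∀ l, |mass x a l| ≤ 2 * ∫ t, |f t| ∂mu01 := fun l => (h l).trans <|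
    mul_le_mul_of_nonneg_left
      (setIntegral_le_integral hf.abs (ae_of_all _ fun _ => abs_nonneg _)) zero_le_two
  exact ⟨fun l => (abs_le.1 (hbound l)).1, fun l => (abs_le.1 (hbound l)).2⟩

lemma limit_mass_eq_zero {x : ℕ → Fin (m + 1) → ℝ} {a : ℕ → Fin m → ℝ} {y : Fin (m + 1) → ℝ}
    {c : Fin m → ℝ} (h : ∀ k, IsTame f (x k) (a k)) (hf : Integrable f mu01)
    (hx : ∀ k, IsSubdivision (x k)) (hy : Tendsto x atTop (𝓝 y))
    (hc : Tendsto (fun k => mass (x k) (a k)) atTop (𝓝 c)) (l : Fin m)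
    (hl : y l.succ - y l.castSucc = 0) : c l = 0 := by
  have hmeasure : Tendsto (fun k => mu01 (piece (x k) l)) atTop (𝓝 0) := by
    have hlen := ENNReal.tendsto_ofReal ((hy.apply_nhds l.succ).sub (hy.apply_nhds l.castSucc))
    rw [hl, ENNReal.ofReal_zero] at hlen
    exact hlen.congr fun k => by rw [← (hx k).mu01_real_piece, ofReal_measureReal]
  have hintegral := (hf.abs.tendsto_setIntegral_nhds_zero hmeasure).const_mul 2
  rw [mul_zero] at hintegral
  have hmass := squeeze_zero (fun _ => abs_nonneg _) (fun k => h k l) hintegral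
  exact abs_eq_zero.1 (tendsto_nhds_unique (hc.apply_nhds l).abs hmass)

lemma exists_subseq_tendsto {x : ℕ → Fin (m + 1) → ℝ} {a : ℕ → Fin m → ℝ}
    (h : ∀ k, IsTame f (x k) (a k)) (hf : Integrable f mu01) (hx : ∀ k, IsSubdivision (x k)) :
    ∃ (u : ℝ → ℝ) (φ : ℕ → ℕ), Integrable u mu01 ∧ StrictMono φ ∧
      Tendsto (fun i => L1dist (stepF (x (φ i)) (a (φ i))) u) atTop (𝓝 0) := by
  have hmem : ∀ k, (x k, mass (x k) (a k)) ∈ (Icc 0 1 : Set (Fin (m + 1) → ℝ)) ×ˢ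
      Icc (fun _ => -(2 * ∫ t, |f t| ∂mu01)) (fun _ => 2 * ∫ t, |f t| ∂mu01) := fun k =>
    ⟨⟨fun i => ((hx k).mem_Icc i).1, fun i => ((hx k).mem_Icc i).2⟩, (h k).mass_mem_Icc hf⟩
  obtain ⟨⟨y, c⟩, -, φ, hφ, hlim⟩ := (isCompact_Icc.prod isCompact_Icc).tendsto_subseq hmem
  obtain ⟨hy, hc⟩ := (Prod.tendsto_iff _ _).1 hlim
  exact ⟨_, φ, integrable_stepF _ _, hφ, tendsto_L1dist_stepF_of_tendsto_mass (fun k => hx (φ k))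
    hy hc (limit_mass_eq_zero (fun k => h (φ k)) hf (fun k => hx (φ k)) hy hc)⟩

end IsTame

lemma exists_subseq_tendsto_of_hasTameRep {v : ℕ → ℝ → ℝ} {N : ℕ} (hf : Integrable f mu01)
    (hv : ∀ k, HasTameRep f N (v k)) :
    ∃ (u : ℝ → ℝ) (φ : ℕ → ℕ), Integrable u mu01 ∧ StrictMono φ ∧
      Tendsto (fun i => L1dist (v (φ i)) u) atTop (𝓝 0) := by
  have hfreq : ∃ᶠ k in atTop, HasTameRep f N (v k) := .of_forall hv
  obtain ⟨n, -, hn⟩ := (finite_Iic N).frequently_exists.1 hfreq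
  obtain ⟨φ, hφ, hrep⟩ := extraction_of_frequently_atTop hn
  choose x a hxa htame using hrep
  obtain ⟨u, ψ, hu, hψ, hlim⟩ :=
    IsTame.exists_subseq_tendsto htame hf fun k => (hxa k).isSubdivision
  refine ⟨u, φ ∘ ψ, hu, hφ.comp hψ, hlim.congr fun i => ?_⟩
  exact (L1dist_congr (hxa (ψ i)).ae_eq u).symm

lemma exists_isTame {x : Fin (m + 1) → ℝ} (hx : IsSubdivision x) (a : Fin m → ℝ)
    (hf : Integrable f mu01) :
    ∃ a', IsTame f x a' ∧ (a' = a ∨ L1dist (stepF x a') f < L1dist (stepF x a) f) := by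
  let P : Fin m → Prop := fun l => |mass x a l| ≤ 2 * ∫ t in piece x l, |f t| ∂mu01
  refine ⟨fun l => if P l then a l else 0, fun l => ?_, ?_⟩
  · by_cases hl : P l
    · simpa only [mass, if_pos hl] using (show |mass x a l| ≤ _ from hl)
    · simpa only [mass, if_neg hl, zero_mul, abs_zero] using
        mul_nonneg zero_le_two (integral_nonneg fun _ => abs_nonneg _)
  · have hlt : ∀ l, ¬ P l → ∫ t in piece x l, |f t| ∂mu01 < ∫ t in piece x l, |a l - f t| ∂mu01 :=
      fun l hl => setIntegral_abs_lt_setIntegral_abs_sub hf.integrableOn (measure_ne_top _ _) <| by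
        rw [hx.mu01_real_piece, ← abs_of_nonneg (sub_nonneg.2 (hx.monotone l.castSucc_le_succ)),
          ← abs_mul]
        exact not_le.1 hl
    by_cases hall : ∀ l, P l
    · exact .inl (funext fun l => if_pos (hall l))
    · obtain ⟨j, hj⟩ := not_forall.1 hall
      rw [hx.L1dist_stepF _ hf, hx.L1dist_stepF _ hf]
      refine .inr (Finset.sum_lt_sum (fun l _ => ?_) ⟨j, Finset.mem_univ j, ?_⟩)
      · by_cases hl : P l
        · simp only [if_pos hl, le_refl]
        · simpa only [if_neg hl, zero_sub, abs_neg] using (hlt l hl).le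
      · simpa only [if_neg hj, zero_sub, abs_neg] using hlt j hj

lemma ncard_jumpSet_le_of_Potts_le (hγ : 0 < γ) (hb : b ≠ ⊤) (hu : Potts γ f u ≤ b) :
    (jumpSet u).ncard ≤ ⌊b.toReal / γ⌋₊ := by
  have hle := ((Potts_le_iff hb).1 hu).2
  refine Nat.le_floor ((le_div_iff₀' hγ).2 ?_)
  linarith [L1dist_nonneg u f]

lemma exists_hasTameRep (hγ : 0 < γ) (hf : Integrable f mu01) (hb : b ≠ ⊤)
    (hu : PottsIn γ f S u ≤ b) :
    ∃ w, HasTameRep f ⌊b.toReal / γ⌋₊ w ∧ (w = u ∨ PottsIn γ f S w < PottsIn γ f S u) := by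
  obtain ⟨hS, hub⟩ := (PottsIn_le_iff hb).1 hu
  obtain ⟨hfin, -⟩ := (Potts_le_iff hb).1 hub
  have hcard := ncard_jumpSet_le_of_Potts_le hγ hb hub
  obtain ⟨x, a, hxa, himage⟩ := exists_minimal_isPCRep hfin
  obtain ⟨a', htame, rfl | hlt⟩ := exists_isTame hxa.isSubdivision a hf
  · exact ⟨u, ⟨_, hcard, x, a', hxa, htame⟩, .inl rfl⟩
  have hrep := isPCRep_stepF hxa.1 hxa.2.1 hxa.2.2.1 a'
  refine ⟨stepF x a', ⟨_, hcard, x, a', hrep, htame⟩, .inr ?_⟩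
  calc PottsIn γ f S (stepF x a')
      ≤ ENNReal.ofReal (γ * (jumpSet u).ncard + L1dist (stepF x a') f) :=
        hrep.PottsIn_le hγ.le f (himage.subset.trans hS)
    _ < ENNReal.ofReal (γ * (jumpSet u).ncard + L1dist u f) := by
        rw [L1dist_congr hxa.ae_eq]
        exact (ENNReal.ofReal_lt_ofReal_iff_of_nonneg
          (add_nonneg (by positivity) (L1dist_nonneg _ _))).2 (by gcongr)
    _ = PottsIn γ f S u := by
        rw [PottsIn_eq_Potts_of_subset hS, Potts_eq_ofReal hfin]

end Compactness

section Minimizers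

variable {γ : ℝ} {f : ℝ → ℝ}

lemma PottsIn_zero_le (hγ : 0 ≤ γ) (f : ℝ → ℝ) (S : Set ℝ) :
    PottsIn γ f S 0 ≤ ENNReal.ofReal (L1dist 0 f) := by
  have hrep : IsPCRep 0 ![0, 1] ![0] := by
    refine ⟨Fin.strictMono_iff_lt_succ.2 (by simp), rfl, rfl, ae_of_all _ fun t => ?_⟩
    simp [stepF]
  have hinner : ({0, Fin.last 1}ᶜ : Set (Fin 2)) = ∅ := by
    ext i; fin_cases i <;> simp
  simpa only [Nat.cast_zero, mul_zero, zero_add] using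
    hrep.PottsIn_le hγ f (n := 0) (S := S) (by rw [hinner, image_empty]; exact empty_subset S)

lemma exists_seq_hasTameRep_tendsto_iInf (hγ : 0 < γ) (hf : Integrable f mu01) (S : Set ℝ) :
    ∃ (N : ℕ) (w : ℕ → ℝ → ℝ), (∀ k, HasTameRep f N (w k)) ∧ (∀ k, PottsIn γ f S (w k) ≠ ⊤) ∧
      Tendsto (fun k => PottsIn γ f S (w k)) atTop (𝓝 (⨅ v, PottsIn γ f S v)) := by
  have hinf : ⨅ v, PottsIn γ f S v < ⊤ :=
    (iInf_le _ 0).trans_lt ((PottsIn_zero_le hγ.le f S).trans_lt ENNReal.ofReal_lt_top)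
  obtain ⟨b, hb, hbmem, hblim⟩ := exists_seq_strictAnti_tendsto' hinf
  choose v hv using fun k => iInf_lt_iff.1 (hbmem k).1
  choose w hw hwv using fun k =>
    exists_hasTameRep hγ hf (hbmem 0).2.ne ((hv k).le.trans (hb.antitone (Nat.zero_le k)))
  have hwb : ∀ k, PottsIn γ f S (w k) ≤ b k := fun k => by
    rcases hwv k with h | h
    · exact h ▸ (hv k).le
    · exact (h.trans (hv k)).le
  exact ⟨_, w, hw, fun k => ne_top_of_le_ne_top (hbmem k).2.ne (hwb k),
    tendsto_of_tendsto_of_tendsto_of_le_of_le tendsto_const_nhds hblim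
      (fun k => iInf_le _ (w k)) hwb⟩

lemma exists_forall_PottsIn_le (hγ : 0 < γ) (hf : Integrable f mu01) {S : Set ℝ}
    (hS : IsClosed S) : ∃ u, ∀ v, PottsIn γ f S u ≤ PottsIn γ f S v := by
  obtain ⟨N, w, hw, hwtop, hwlim⟩ := exists_seq_hasTameRep_tendsto_iInf hγ hf S
  obtain ⟨u, φ, hu, hφ, hlim⟩ := exists_subseq_tendsto_of_hasTameRep hf hw
  have hwS : ∀ k, jumpSet (w k) ⊆ S ∧ Potts γ f (w k) ≤ PottsIn γ f S (w k) := fun k =>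
    (PottsIn_le_iff (hwtop k)).1 le_rfl
  have hwi : ∀ k, Integrable (w k) mu01 := fun k =>
    integrable_of_Potts_ne_top (ne_top_of_le_ne_top (hwtop k) (hwS k).2)
  have huS : jumpSet u ⊆ S :=
    jumpSet_subset_of_tendsto hS hu (fun k => hwi (φ k)) hlim fun k => (hwS (φ k)).1
  refine ⟨u, fun v => ?_⟩
  calc PottsIn γ f S u = Potts γ f u := PottsIn_eq_Potts_of_subset huS
    _ ≤ liminf (fun k => PottsIn γ f S (w (φ k))) atTop :=
        Potts_le_liminf_PottsIn hγ hf (fun _ => S) hu hlim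
    _ = ⨅ v, PottsIn γ f S v := (hwlim.comp hφ.tendsto_atTop).liminf_eq
    _ ≤ PottsIn γ f S v := iInf_le _ v

lemma exists_subseq_tendsto_of_forall_PottsIn_le (hγ : 0 < γ) (hf : Integrable f mu01)
    {S : ℕ → Set ℝ} {v : ℕ → ℝ → ℝ} (hv : ∀ k w, PottsIn γ f (S k) (v k) ≤ PottsIn γ f (S k) w) :
    ∃ (u : ℝ → ℝ) (φ : ℕ → ℕ), Integrable u mu01 ∧ StrictMono φ ∧
      Tendsto (fun i => L1dist (v (φ i)) u) atTop (𝓝 0) := by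
  refine exists_subseq_tendsto_of_hasTameRep (N := ⌊(ENNReal.ofReal (L1dist 0 f)).toReal / γ⌋₊) hf
    fun k => ?_
  obtain ⟨w, hw, rfl | hlt⟩ := exists_hasTameRep hγ hf ENNReal.ofReal_ne_top
    ((hv k 0).trans (PottsIn_zero_le hγ.le f (S k)))
  · exact hw
  · exact absurd (hv k w) hlt.not_ge

end Minimizers

section Recovery

variable {γ : ℝ} {f u : ℝ → ℝ} {X : ℕ → Set ℝ}

lemma exists_seq_nodes_tendsto {m : ℕ} {x : Fin (m + 1) → ℝ} (hx : StrictMono x)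
    (h0 : x 0 = 0) (h1 : x (Fin.last m) = 1)
    (hX : ∀ p ∈ Ioo (0 : ℝ) 1, Tendsto (fun k => Metric.infEDist p (X k)) atTop (𝓝 0)) :
    ∃ y : ℕ → Fin (m + 1) → ℝ, Tendsto y atTop (𝓝 x) ∧ (∀ k, y k 0 = 0) ∧
      (∀ k, y k (Fin.last m) = 1) ∧ ∀ᶠ k in atTop, y k '' {0, Fin.last m}ᶜ ⊆ X k := by
  have hinner : ∀ i ∉ ({0, Fin.last m} : Set (Fin (m + 1))),
      ∃ z : ℕ → ℝ, Tendsto z atTop (𝓝 (x i)) ∧ ∀ᶠ k in atTop, z k ∈ X k := fun i hi => by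
    simp only [mem_insert_iff, mem_singleton_iff, not_or] at hi
    exact exists_seq_tendsto_of_tendsto_infEDist <| hX (x i)
      ⟨h0 ▸ hx (Fin.pos_of_ne_zero hi.1), h1 ▸ hx (Fin.lt_last_iff_ne_last.2 hi.2)⟩
  choose! z hz hzX using hinner
  refine ⟨fun k i => if i ∈ ({0, Fin.last m} : Set (Fin (m + 1))) then x i else z i k,
    tendsto_pi_nhds.2 fun i => ?_, fun k => by simp [h0], fun k => by simp [h1], ?_⟩
  · by_cases hi : i ∈ ({0, Fin.last m} : Set (Fin (m + 1)))
    · simp only [if_pos hi, tendsto_const_nhds]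
    · simpa only [if_neg hi] using hz i hi
  · have hall : ∀ᶠ k in atTop, ∀ i, i ∉ ({0, Fin.last m} : Set (Fin (m + 1))) → z i k ∈ X k :=
      eventually_all.2 fun i => by
        by_cases hi : i ∈ ({0, Fin.last m} : Set (Fin (m + 1)))
        · exact .of_forall fun _ h => absurd hi h
        · exact (hzX i hi).mono fun _ h _ => h
    refine hall.mono fun k hk => image_subset_iff.2 fun i hi => ?_
    simpa only [mem_preimage, if_neg hi] using hk i hi

lemma exists_recovery_sequence (hγ : 0 ≤ γ) (hf : Integrable f mu01) (hu : Integrable u mu01)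
    (hX : ∀ p ∈ Ioo (0 : ℝ) 1, Tendsto (fun k => Metric.infEDist p (X k)) atTop (𝓝 0)) :
    ∃ v : ℕ → ℝ → ℝ, (∀ k, Integrable (v k) mu01) ∧
      Tendsto (fun k => L1dist (v k) u) atTop (𝓝 0) ∧
      limsup (fun k => PottsIn γ f (X k) (v k)) atTop ≤ Potts γ f u := by
  by_cases hfin : (jumpSet u).Finite
  swap
  · refine ⟨fun _ => u, fun _ => hu, by simp [L1dist], ?_⟩
    simp only [Potts, isPC_iff, hfin, if_false, le_top]
  obtain ⟨x, a, hxa, -⟩ := exists_minimal_isPCRep hfin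
  obtain ⟨y, hy, hy0, hy1, hyX⟩ := exists_seq_nodes_tendsto hxa.1 hxa.2.1 hxa.2.2.1 hX
  have hlim : Tendsto (fun k => L1dist (stepF (y k) a) u) atTop (𝓝 0) :=
    (tendsto_L1dist_stepF hy a).congr fun k => by
      rw [L1dist_comm, ← L1dist_congr hxa.ae_eq, L1dist_comm]
  refine ⟨fun k => stepF (y k) a, fun k => integrable_stepF _ _, hlim, ?_⟩
  have hbound : ∀ᶠ k in atTop, PottsIn γ f (X k) (stepF (y k) a) ≤
      ENNReal.ofReal (γ * (jumpSet u).ncard + L1dist (stepF (y k) a) f) := by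
    filter_upwards [eventually_strictMono_of_tendsto hxa.1 hy, hyX] with k hk hkX
    exact (isPCRep_stepF hk (hy0 k) (hy1 k) a).PottsIn_le hγ f hkX
  calc limsup (fun k => PottsIn γ f (X k) (stepF (y k) a)) atTop
      ≤ limsup (fun k => ENNReal.ofReal
          (γ * (jumpSet u).ncard + L1dist (stepF (y k) a) f)) atTop := limsup_le_limsup hbound
    _ = ENNReal.ofReal (γ * (jumpSet u).ncard + L1dist u f) :=
        (ENNReal.tendsto_ofReal ((tendsto_L1dist_of_tendsto hu (fun k => integrable_stepF _ _)
          hlim hf).const_add _)).limsup_eq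
    _ = Potts γ f u := (Potts_eq_ofReal hfin).symm

end Recovery

theorem statement_2_general
    (f : ℝ → ℝ) (hf : IntegrableOn f (Set.Icc 0 1))
    (γ : ℝ) (hγ : 0 < γ)
    (X : ℕ → Set ℝ) (hXclosed : ∀ k, IsClosed (X k))
    (hXdense : ∀ p ∈ Ioo (0 : ℝ) 1, Tendsto (fun k => Metric.infEDist p (X k)) atTop (𝓝 0)) :
    (∀ u : ℝ → ℝ, IntegrableOn u (Set.Icc 0 1) →
      ∀ useq : ℕ → ℝ → ℝ, (∀ k, IntegrableOn (useq k) (Set.Icc 0 1)) →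
        Tendsto (fun k => L1dist (useq k) u) atTop (𝓝 0) →
        Potts γ f u ≤ liminf (fun k => PottsIn γ f (X k) (useq k)) atTop) ∧
    (∀ u : ℝ → ℝ, IntegrableOn u (Set.Icc 0 1) →
      ∃ useq : ℕ → ℝ → ℝ, (∀ k, IntegrableOn (useq k) (Set.Icc 0 1)) ∧
        Tendsto (fun k => L1dist (useq k) u) atTop (𝓝 0) ∧
        limsup (fun k => PottsIn γ f (X k) (useq k)) atTop ≤ Potts γ f u) ∧
    (∀ k, ∃ u : ℝ → ℝ, ∀ v : ℝ → ℝ, PottsIn γ f (X k) u ≤ PottsIn γ f (X k) v) ∧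
    (∀ useq : ℕ → ℝ → ℝ,
      (∀ k, ∀ v : ℝ → ℝ, PottsIn γ f (X k) (useq k) ≤ PottsIn γ f (X k) v) →
      (∃ (u : ℝ → ℝ) (φ : ℕ → ℕ), IntegrableOn u (Set.Icc 0 1) ∧ StrictMono φ ∧
        Tendsto (fun i => L1dist (useq (φ i)) u) atTop (𝓝 0)) ∧
      (∀ (u : ℝ → ℝ) (φ : ℕ → ℕ), IntegrableOn u (Set.Icc 0 1) → StrictMono φ →
        Tendsto (fun i => L1dist (useq (φ i)) u) atTop (𝓝 0) →
        Potts γ f u = ⨅ (v : ℝ → ℝ) (_ : IntegrableOn v (Set.Icc 0 1)), Potts γ f v)) := by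
  have hf' : Integrable f mu01 := hf
  refine ⟨fun u hu v _ hlim => Potts_le_liminf_PottsIn hγ hf' X hu hlim,
    fun u hu => exists_recovery_sequence hγ.le hf' hu hXdense,
    fun k => exists_forall_PottsIn_le hγ hf' (hXclosed k),
    fun v hv => ⟨exists_subseq_tendsto_of_forall_PottsIn_le hγ hf' hv, fun u φ hu hφ hlim =>
      le_antisymm (le_iInf₂ fun w hw => ?_) (iInf₂_le u hu)⟩⟩
  obtain ⟨r, -, -, hr⟩ := exists_recovery_sequence hγ.le hf' hw hXdense
  exact le_of_tendsto_minimizers hv hφ.tendsto_atTop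
    (Potts_le_liminf_PottsIn hγ hf' (fun i => X (φ i)) hu hlim) hr

theorem statement_2
    (f : ℝ → ℝ) (hf : IntegrableOn f (Set.Icc 0 1))
    (γ : ℝ) (hγ : 0 < γ)
    (X : ℕ → Set ℝ) (hXfin : ∀ k, (X k).Finite) (hXsub : ∀ k, X k ⊆ Set.Icc 0 1)
    (hXnest : ∀ k, X k ⊆ X (k + 1)) (hXdense : Set.Icc (0:ℝ) 1 ⊆ closure (⋃ k, X k)) :
    -- (a) Γ-convergence: liminf inequality …
    (∀ u : ℝ → ℝ, IntegrableOn u (Set.Icc 0 1) →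
      ∀ useq : ℕ → ℝ → ℝ, (∀ k, IntegrableOn (useq k) (Set.Icc 0 1)) →
        Tendsto (fun k => L1dist (useq k) u) atTop (nhds 0) →
        Potts γ f u ≤ liminf (fun k => PottsIn γ f (X k) (useq k)) atTop) ∧
    -- … and existence of recovery sequences
    (∀ u : ℝ → ℝ, IntegrableOn u (Set.Icc 0 1) →
      ∃ useq : ℕ → ℝ → ℝ, (∀ k, IntegrableOn (useq k) (Set.Icc 0 1)) ∧
        Tendsto (fun k => L1dist (useq k) u) atTop (nhds 0) ∧
        limsup (fun k => PottsIn γ f (X k) (useq k)) atTop ≤ Potts γ f u) ∧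
    -- (b) each semi-discrete functional has a minimizer
    (∀ k, ∃ u : ℝ → ℝ, ∀ v : ℝ → ℝ, PottsIn γ f (X k) u ≤ PottsIn γ f (X k) v) ∧
    -- (c) sequences of minimizers have accumulation points, and each accumulation point
    -- minimizes the continuous Potts functional
    (∀ useq : ℕ → ℝ → ℝ,
      (∀ k, ∀ v : ℝ → ℝ, PottsIn γ f (X k) (useq k) ≤ PottsIn γ f (X k) v) →
      (∃ (u : ℝ → ℝ) (φ : ℕ → ℕ), IntegrableOn u (Set.Icc 0 1) ∧ StrictMono φ ∧
        Tendsto (fun i => L1dist (useq (φ i)) u) atTop (nhds 0)) ∧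
      (∀ (u : ℝ → ℝ) (φ : ℕ → ℕ), IntegrableOn u (Set.Icc 0 1) → StrictMono φ →
        Tendsto (fun i => L1dist (useq (φ i)) u) atTop (nhds 0) →
        Potts γ f u = ⨅ (v : ℝ → ℝ) (_ : IntegrableOn v (Set.Icc 0 1)), Potts γ f v)) := by
  exact statement_2_general f hf γ hγ X (fun k => (hXfin k).isClosed) fun p hp =>
    tendsto_infEDist_of_monotone (monotone_nat_of_le_succ hXnest)
      (hXdense (Ioo_subset_Icc_self hp))
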